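/- arXiv:1705.05422 — 5 statements merged into one kernel-verified Lean document; each statement's English description precedes it below -/
import Mathlib

section
/- Let A be an invertible linear map of ℝ^d and let f : ℝ^d → ℝ^d be a homeomorphism such that sup_{x ∈ ℝ^d} ‖f(x) − A(x)‖ < ∞ and sup_{x ∈ ℝ^d} ‖f⁻¹(x) − A⁻¹(x)‖ < ∞. Then for each integer n ∈ ℤ and each real number C > 1 there exists M > 0 such that for all x, y ∈ ℝ^d with ‖x − y‖ > M one has 1/C < ‖fⁿ(x) − fⁿ(y)‖ / ‖Aⁿ(x) − Aⁿ(y)‖ < C. -/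
theorem aux_nat {E : Type*} [NormedAddCommGroup E] [NormedSpace ℝ E]
    (A : E ≃L[ℝ] E) (f : Equiv.Perm E) (K : ℝ) (h : ∀ x, ‖f x - A x‖ ≤ K) (n : ℕ) :
    ∃ K' : ℝ, ∀ x, ‖(f ^ n) x - (A ^ n) x‖ ≤ K' := by
  induction n with
  | zero => exact ⟨0, fun x => by
      have e : (A ^ 0) x = x := by rw [pow_zero]; rfl
      rw [e]; simp⟩
  | succ n ih =>
    obtain ⟨L, hL⟩ := ih
    refine ⟨K + ‖(A : E →L[ℝ] E)‖ * L, fun x => ?_⟩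
    have e1 : (f ^ (n+1)) x = f ((f ^ n) x) := by rw [pow_succ']; rfl
    have e2 : (A ^ (n+1)) x = A ((A ^ n) x) := by rw [pow_succ']; rfl
    rw [e1, e2]
    have e3 : f ((f ^ n) x) - A ((A ^ n) x)
        = (f ((f ^ n) x) - A ((f ^ n) x)) + (A : E →L[ℝ] E) ((f ^ n) x - (A ^ n) x) := by
      simp
    rw [e3]
    refine (norm_add_le _ _).trans (add_le_add (h _) ?_)
    exact ((A : E →L[ℝ] E).le_opNorm _).trans
      (mul_le_mul_of_nonneg_left (hL x) (norm_nonneg _))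

theorem aux_int {E : Type*} [NormedAddCommGroup E] [NormedSpace ℝ E]
    (A : E ≃L[ℝ] E) (f : Equiv.Perm E) (K : ℝ) (h : ∀ x, ‖f x - A x‖ ≤ K)
    (K₂ : ℝ) (h₂ : ∀ x, ‖f.symm x - A.symm x‖ ≤ K₂) (n : ℤ) :
    ∃ K' : ℝ, ∀ x, ‖(f ^ n) x - (A ^ n) x‖ ≤ K' := by
  obtain ⟨m, rfl | rfl⟩ := n.eq_nat_or_neg
  · simpa only [zpow_natCast] using aux_nat A f K h m
  · have := aux_nat A⁻¹ f⁻¹ K₂ h₂ m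
    simpa only [zpow_neg, zpow_natCast, inv_pow] using this

theorem aux_main {E : Type*} [NormedAddCommGroup E] [NormedSpace ℝ E]
    (B : E ≃L[ℝ] E) (g : E → E) (K : ℝ) (h : ∀ x, ‖g x - B x‖ ≤ K) (C : ℝ) (hC : 1 < C) :
    ∃ M > 0, ∀ x y : E, M < ‖x - y‖ →
      1 / C < ‖g x - g y‖ / ‖B x - B y‖ ∧ ‖g x - g y‖ / ‖B x - B y‖ < C := by
  have hK : 0 ≤ K := (norm_nonneg _).trans (h 0)
  have hC1 : 0 < C - 1 := by linarith
  have hC0 : 0 < C := by linarith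
  have hN : 0 ≤ ‖(B.symm : E →L[ℝ] E)‖ := norm_nonneg _
  refine ⟨(‖(B.symm : E →L[ℝ] E)‖ + 1) * (2 * K * C / (C - 1)) + 1, by positivity, ?_⟩
  intro x y hxy
  have h1 : ‖x - y‖ ≤ ‖(B.symm : E →L[ℝ] E)‖ * ‖B x - B y‖ := by
    have := (B.symm : E →L[ℝ] E).le_opNorm (B x - B y)
    simpa using this
  have hD0 := norm_nonneg (B x - B y)
  have h2 : 2 * K * C / (C - 1) < ‖B x - B y‖ := by
    by_contra hc
    push Not at hc
    nlinarith [mul_le_mul_of_nonneg_left hc hN]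
  have hD : 0 < ‖B x - B y‖ := lt_of_le_of_lt (by positivity) h2
  rw [div_lt_iff₀ hC1] at h2
  have e : (g x - g y) - (B x - B y) = (g x - B x) - (g y - B y) := by abel
  have h3 : ‖(g x - g y) - (B x - B y)‖ ≤ 2 * K := by
    rw [e]; linarith [norm_sub_le (g x - B x) (g y - B y), h x, h y]
  have h4 := abs_le.1 ((abs_norm_sub_norm_le (g x - g y) (B x - B y)).trans h3)
  constructor
  · rw [div_lt_div_iff₀ hC0 hD]
    nlinarith [h4.1]
  · rw [div_lt_iff₀ hD]
    nlinarith [h4.2]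

/-- If `f` is a homeomorphism of `ℝ^d` at bounded uniform distance from an
invertible linear map `A` (and likewise for the inverses), then for every
`n : ℤ` and `C > 1` there is `M > 0` such that points at distance `> M` satisfy
`1/C < ‖fⁿ x − fⁿ y‖ / ‖Aⁿ x − Aⁿ y‖ < C`. -/
theorem iterate_dist_ratio_close_of_bounded_distance {d : ℕ}
    (A : EuclideanSpace ℝ (Fin d) ≃L[ℝ] EuclideanSpace ℝ (Fin d))
    (f : EuclideanSpace ℝ (Fin d) ≃ₜ EuclideanSpace ℝ (Fin d))
    (hbd : ∃ K : ℝ, ∀ x, ‖f x - A x‖ ≤ K)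
    (hbd' : ∃ K : ℝ, ∀ x, ‖f.symm x - A.symm x‖ ≤ K)
    (n : ℤ) (C : ℝ) (hC : 1 < C) :
    ∃ M > 0, ∀ x y : EuclideanSpace ℝ (Fin d), M < ‖x - y‖ →
      1 / C < ‖(f.toEquiv ^ n) x - (f.toEquiv ^ n) y‖ / ‖(A ^ n) x - (A ^ n) y‖ ∧
      ‖(f.toEquiv ^ n) x - (f.toEquiv ^ n) y‖ / ‖(A ^ n) x - (A ^ n) y‖ < C := by
  obtain ⟨K, hK⟩ := hbd
  obtain ⟨K₂, hK₂⟩ := hbd'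
  obtain ⟨L, hL⟩ := aux_int A f.toEquiv K hK K₂ hK₂ n
  exact aux_main (A ^ n) _ L hL C hC
end

section
/- For every integer n ≥ 3, the polynomial p_n has a real root in the open interval (n, n+1). -/
/-- For every `n ≥ 3`, the polynomial `p_n(t) = t⁴ − (n+4)t³ + (4n+3)t² − (3n+2)t + 1`
has a real root in the open interval `(n, n+1)`. -/
theorem pn_has_root_in_Ioo_n (n : ℕ) (hn : 3 ≤ n) :
    ∃ t ∈ Set.Ioo (n : ℝ) ((n : ℝ) + 1),
      t ^ 4 - ((n : ℝ) + 4) * t ^ 3 + (4 * (n : ℝ) + 3) * t ^ 2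
        - (3 * (n : ℝ) + 2) * t + 1 = 0 := by
  have h3 : (3 : ℝ) ≤ (n : ℝ) := by exact_mod_cast hn
  have hc : ContinuousOn (fun t : ℝ => t ^ 4 - ((n : ℝ) + 4) * t ^ 3 + (4 * (n : ℝ) + 3) * t ^ 2
        - (3 * (n : ℝ) + 2) * t + 1) (Set.Icc (n : ℝ) ((n : ℝ) + 1)) := by
    fun_prop
  have h := intermediate_value_Ioo (by linarith : (n : ℝ) ≤ (n : ℝ) + 1) hc
  have h0 : (0 : ℝ) ∈ Set.Ioo
      ((n : ℝ) ^ 4 - ((n : ℝ) + 4) * (n : ℝ) ^ 3 + (4 * (n : ℝ) + 3) * (n : ℝ) ^ 2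
        - (3 * (n : ℝ) + 2) * (n : ℝ) + 1)
      (((n : ℝ) + 1) ^ 4 - ((n : ℝ) + 4) * ((n : ℝ) + 1) ^ 3
        + (4 * (n : ℝ) + 3) * ((n : ℝ) + 1) ^ 2
        - (3 * (n : ℝ) + 2) * ((n : ℝ) + 1) + 1) := by
    generalize (n : ℝ) = x at h3
    obtain ⟨y, rfl⟩ : ∃ y, x = y + 3 := ⟨x - 3, by ring⟩
    have hy : 0 ≤ y := by linarith
    constructor
    · ring_nf
      linarith
    · ring_nf
      positivity
  obtain ⟨t, ht, h⟩ := h h0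
  exact ⟨t, ht, h⟩
end

section
/- For every real number ε with 0 < ε < 1 there exists N such that for all natural numbers n ≥ N, the polynomial p_n has a real root in the open interval (1, 1+ε). -/
/-- For every `0 < ε < 1`, for all large `n` the polynomial
`p_n(t) = t⁴ − (n+4)t³ + (4n+3)t² − (3n+2)t + 1` has a real root in `(1, 1+ε)`. -/
theorem pn_has_root_in_Ioo_one (ε : ℝ) (hε0 : 0 < ε) (hε1 : ε < 1) :
    ∃ N : ℕ, ∀ n : ℕ, N ≤ n →
      ∃ t ∈ Set.Ioo (1 : ℝ) (1 + ε),
        t ^ 4 - ((n : ℝ) + 4) * t ^ 3 + (4 * (n : ℝ) + 3) * t ^ 2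
          - (3 * (n : ℝ) + 2) * t + 1 = 0 := by
  obtain ⟨N, hN⟩ := exists_nat_gt (4 / ε)
  refine ⟨N, fun n hn => ?_⟩
  have hn' : (N : ℝ) ≤ n := by exact_mod_cast hn
  have h4 : 4 < (n : ℝ) * ε := (div_lt_iff₀ hε0).1 (lt_of_lt_of_le hN hn')
  have hc : ContinuousOn (fun t : ℝ => t ^ 4 - ((n : ℝ) + 4) * t ^ 3 + (4 * (n : ℝ) + 3) * t ^ 2
          - (3 * (n : ℝ) + 2) * t + 1) (Set.Icc 1 (1 + ε)) := by fun_prop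
  have key := intermediate_value_Ioo (by linarith : (1 : ℝ) ≤ 1 + ε) hc
  have h0 := @key 0 ?_
  · obtain ⟨t, ht, h⟩ := h0
    exact ⟨t, ht, h⟩
  · constructor
    · ring_nf
      norm_num
    · have e : (1 + ε) ^ 4 - ((n : ℝ) + 4) * (1 + ε) ^ 3 + (4 * (n : ℝ) + 3) * (1 + ε) ^ 2
          - (3 * (n : ℝ) + 2) * (1 + ε) + 1
          = 2 * (n * ε) + (n * ε) * (ε * (1 - ε)) + ε ^ 4 - 3 * ε ^ 2 - 4 * ε - 1 := by ring
      have h1 : 0 ≤ ((n : ℝ) * ε) * (ε * (1 - ε)) :=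
        mul_nonneg (by linarith) (mul_nonneg hε0.le (by linarith))
      have h2 : 0 < ε ^ 4 := by positivity
      have h3 : ε ^ 2 < 1 := by nlinarith
      show 0 < _
      simp only [e]
      linarith
end

section
/- For every real number ε with 0 < ε < 1 there exists N such that for all natural numbers n ≥ N, the polynomial p_n has a real root in the open interval (3−ε, 3). -/
/-- For every `0 < ε < 1`, for all large `n` the polynomial
`p_n(t) = t⁴ − (n+4)t³ + (4n+3)t² − (3n+2)t + 1` has a real root in `(3−ε, 3)`. -/
theorem pn_has_root_in_Ioo_three (ε : ℝ) (hε0 : 0 < ε) (hε1 : ε < 1) :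
    ∃ N : ℕ, ∀ n : ℕ, N ≤ n →
      ∃ t ∈ Set.Ioo (3 - ε) (3 : ℝ),
        t ^ 4 - ((n : ℝ) + 4) * t ^ 3 + (4 * (n : ℝ) + 3) * t ^ 2
          - (3 * (n : ℝ) + 2) * t + 1 = 0 := by
  obtain ⟨N, hN⟩ := exists_nat_gt (12 / ε)
  refine ⟨N, fun n hn => ?_⟩
  have hn' : (N : ℝ) ≤ n := by exact_mod_cast hn
  have h12 : 12 < (n : ℝ) * ε := by
    rw [div_lt_iff₀ hε0] at hN
    nlinarith
  have hc : ContinuousOn (fun t : ℝ => t ^ 4 - ((n : ℝ) + 4) * t ^ 3 + (4 * (n : ℝ) + 3) * t ^ 2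
          - (3 * (n : ℝ) + 2) * t + 1) (Set.Icc (3 - ε) 3) := by fun_prop
  have hq : 2 ≤ (3 - ε) * (2 - ε) := by nlinarith
  have h1 : 12 * 2 ≤ ((n : ℝ) * ε) * ((3 - ε) * (2 - ε)) :=
    mul_le_mul h12.le hq (by norm_num) (by linarith)
  have h2 : ε * ((3 - ε) ^ 2 * (2 - ε)) ≤ 1 * 18 := by
    have h3 : (3 - ε) ^ 2 ≤ 9 := by nlinarith
    have h4 : (3 - ε) ^ 2 * (2 - ε) ≤ 9 * 2 :=
      mul_le_mul h3 (by linarith) (by linarith) (by norm_num)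
    exact mul_le_mul hε1.le (by linarith)
      (mul_nonneg (sq_nonneg _) (by linarith)) (by norm_num)
  obtain ⟨t, ht, h⟩ := intermediate_value_Ioo' (by linarith : 3 - ε ≤ 3) hc
    (show (0 : ℝ) ∈ Set.Ioo _ _ from ⟨by ring_nf; norm_num, by
      show (0 : ℝ) < (3 - ε) ^ 4 - ((n : ℝ) + 4) * (3 - ε) ^ 3
        + (4 * (n : ℝ) + 3) * (3 - ε) ^ 2 - (3 * (n : ℝ) + 2) * (3 - ε) + 1
      linarith only [h1, h2, hε0]⟩)
  exact ⟨t, ht, h⟩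
end

section
/- There exists N such that for every natural number n ≥ N the polynomial p_n has four distinct real roots β_n^s, β_{1,n}^c, β_{2,n}^c, β_n^u satisfying 0 < β_n^s < 1 < β_{1,n}^c < β_{2,n}^c < β_n^u and β_n^s · β_{1,n}^c · β_{2,n}^c · β_n^u = 1; moreover, as n → ∞, β_n^u / n → 1, β_{1,n}^c → 1, β_{2,n}^c → 3, and 3n · β_n^s → 1. -/
open Filter Topology

lemma pn_vieta (A B C s a b u : ℝ) (h1 : s < a) (h2 : a < b) (h3 : b < u)
    (hs : s^4 - A*s^3 + B*s^2 - C*s + 1 = 0) (ha : a^4 - A*a^3 + B*a^2 - C*a + 1 = 0)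
    (hb : b^4 - A*b^3 + B*b^2 - C*b + 1 = 0) (hu : u^4 - A*u^3 + B*u^2 - C*u + 1 = 0) :
    s * a * b * u = 1 := by
  have d1 : ∀ x y : ℝ, x < y → x^4 - A*x^3 + B*x^2 - C*x + 1 = 0 →
      y^4 - A*y^3 + B*y^2 - C*y + 1 = 0 →
      (x^3+x^2*y+x*y^2+y^3) - A*(x^2+x*y+y^2) + B*(x+y) - C = 0 := by
    intro x y h hx hy
    have : x - y ≠ 0 := sub_ne_zero.mpr h.ne
    apply mul_left_cancel₀ this
    linear_combination hx - hy
  have e1 := d1 s a h1 hs ha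
  have e2 := d1 s b (h1.trans h2) hs hb
  have e3 := d1 s u (h1.trans (h2.trans h3)) hs hu
  have f1 : (s^2+a^2+b^2+s*a+s*b+a*b) - A*(s+a+b) + B = 0 := by
    apply mul_left_cancel₀ (sub_ne_zero.mpr h2.ne)
    linear_combination e1 - e2
  have f2 : (s^2+a^2+u^2+s*a+s*u+a*u) - A*(s+a+u) + B = 0 := by
    apply mul_left_cancel₀ (sub_ne_zero.mpr (h2.trans h3).ne)
    linear_combination e1 - e3
  have g : A = s+a+b+u := by
    apply mul_left_cancel₀ (sub_ne_zero.mpr h3.ne)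
    linear_combination f2 - f1
  subst g
  have hB : B = (s+a+b+u)*(s+a+b) - (s^2+a^2+b^2+s*a+s*b+a*b) := by linarith
  subst hB
  have hC : C = s*a*b+s*a*u+s*b*u+a*b*u := by linear_combination -e1
  subst hC
  linear_combination -hs

lemma pn_ivt (n x y : ℝ) (hxy : x < y)
    (h : ((x-n)*(x*(x-1)*(x-3)) - 2*x+1 < 0 ∧ 0 < (y-n)*(y*(y-1)*(y-3)) - 2*y+1) ∨
      (0 < (x-n)*(x*(x-1)*(x-3)) - 2*x+1 ∧ (y-n)*(y*(y-1)*(y-3)) - 2*y+1 < 0)) :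
    ∃ t, x < t ∧ t < y ∧
      t ^ 4 - (n + 4) * t ^ 3 + (4 * n + 3) * t ^ 2 - (3 * n + 2) * t + 1 = 0 := by
  have hc : ContinuousOn (fun t : ℝ => (t-n)*(t*(t-1)*(t-3)) - 2*t+1) (Set.Icc x y) := by
    fun_prop
  have : (0:ℝ) ∈ (fun t : ℝ => (t-n)*(t*(t-1)*(t-3)) - 2*t+1) '' Set.Ioo x y := by
    rcases h with h | h
    · exact intermediate_value_Ioo hxy.le hc h
    · exact intermediate_value_Ioo' hxy.le hc ⟨h.2, h.1⟩
  obtain ⟨t, ht, h0⟩ := this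
  refine ⟨t, ht.1, ht.2, ?_⟩
  simp only at h0
  linear_combination h0

lemma pn_roots (n : ℝ) (hn : 10 ≤ n) : ∃ s a b u : ℝ,
    (1/(3*n+2) < s ∧ s < 1/(3*n)) ∧ (1 < a ∧ a < 1+1/n) ∧ (3-2/n < b ∧ b < 3) ∧
    (n < u ∧ u < n+1) ∧ (∀ t ∈ ({s, a, b, u} : Set ℝ),
      t ^ 4 - (n + 4) * t ^ 3 + (4 * n + 3) * t ^ 2 - (3 * n + 2) * t + 1 = 0) := by
  have hn0 : 0 < n := by linarith
  obtain ⟨e, he⟩ : ∃ e, e = 1/n := ⟨_, rfl⟩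
  have hne : n * e = 1 := by rw [he]; field_simp
  have he0 : 0 < e := by rw [he]; positivity
  have he1 : e ≤ 1/10 := by nlinarith
  obtain ⟨s, hs1, hs2, hs⟩ := pn_ivt n (1/(3*n+2)) (1/(3*n)) (by gcongr; linarith) (by
    right
    constructor
    · obtain ⟨d, hd⟩ : ∃ d, d = 1/(3*n+2) := ⟨_, rfl⟩
      have hnd : (3*n+2) * d = 1 := by rw [hd]; field_simp
      have hd0 : 0 < d := by rw [hd]; positivity
      have hd1 : d ≤ 1/10 := by nlinarith
      rw [← hd]
      have : (d-n)*(d*(d-1)*(d-3)) - 2*d+1 = d^2 * (n*(4-d) + (d-1)*(d-3)) := by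
        linear_combination -hnd
      rw [this]
      have h1 : 0 < n*(4-d) := mul_pos hn0 (by linarith)
      have h2 : 0 < (d-1)*(d-3) := mul_pos_of_neg_of_neg (by linarith) (by linarith)
      positivity
    · have h3 : 1/(3*n) = e/3 := by rw [he]; field_simp
      rw [h3]
      have : (e/3-n)*(e/3*(e/3-1)*(e/3-3)) - 2*(e/3)+1
          = e * (-2/9 - e/27 + e/3 * (e/3-1)*(e/3-3)/3 ) := by
        linear_combination (-(1/3)*(e/3-1)*(e/3-3)) * hne
      rw [this]
      apply mul_neg_of_pos_of_neg he0
      nlinarith [mul_pos he0 he0, mul_pos he0 (mul_pos he0 he0)])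
  obtain ⟨a, ha1, ha2, ha⟩ := pn_ivt n 1 (1+e) (by linarith) (by
    left
    constructor
    · norm_num
    · have : (1+e-n)*((1+e)*(1+e-1)*(1+e-3)) - 2*(1+e)+1
          = (1+e)*(2-e)*(1-e-e^2) - 1 - 2*e := by
        linear_combination ((1+e)*(2-e)) * hne
      rw [this]
      nlinarith [mul_pos he0 he0, mul_pos he0 (mul_pos he0 he0), pow_pos he0 4])
  obtain ⟨b, hb1, hb2, hb⟩ := pn_ivt n (3-2*e) 3 (by linarith) (by
    right
    constructor
    · have : (3-2*e-n)*((3-2*e)*(3-2*e-1)*(3-2*e-3)) - 2*(3-2*e)+1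
          = 2*(3-2*e)*(2-2*e)*(1-3*e+2*e^2) - 5 + 4*e := by
        linear_combination (2*(3-2*e)*(2-2*e)) * hne
      rw [this]
      nlinarith [mul_pos he0 he0, mul_pos he0 (mul_pos he0 he0), pow_pos he0 4]
    · norm_num)
  obtain ⟨u, hu1, hu2, hu⟩ := pn_ivt n n (n+1) (by linarith) (by
    left
    constructor
    · simp; linarith
    · have : 0 < n * n := by positivity
      nlinarith [mul_pos hn0 this])
  refine ⟨s, a, b, u, ⟨hs1, hs2⟩, ⟨ha1, by rw [← he]; exact ha2⟩, ⟨?_, hb2⟩, ⟨hu1, hu2⟩, ?_⟩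
  · have : 2/n = 2*e := by rw [he]; field_simp
    rw [this]; exact hb1
  · intro t ht
    simp only [Set.mem_insert_iff, Set.mem_singleton_iff] at ht
    rcases ht with rfl | rfl | rfl | rfl <;> assumption

/-- For all large `n`, `p_n` has four distinct real roots
`0 < β_n^s < 1 < β_{1,n}^c < β_{2,n}^c < β_n^u` of product `1`, with
`β_n^u/n → 1`, `β_{1,n}^c → 1`, `β_{2,n}^c → 3` and `3n·β_n^s → 1`. -/
theorem pn_four_roots_asymptotics :
    ∃ N : ℕ, ∃ s a b u : ℕ → ℝ,
      (∀ n : ℕ, N ≤ n →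
        (0 < s n ∧ s n < 1 ∧ 1 < a n ∧ a n < b n ∧ b n < u n) ∧
        s n * a n * b n * u n = 1 ∧
        (∀ t ∈ ({s n, a n, b n, u n} : Set ℝ),
          t ^ 4 - ((n : ℝ) + 4) * t ^ 3 + (4 * (n : ℝ) + 3) * t ^ 2
            - (3 * (n : ℝ) + 2) * t + 1 = 0)) ∧
      Tendsto (fun n : ℕ => u n / (n : ℝ)) atTop (𝓝 1) ∧
      Tendsto a atTop (𝓝 1) ∧
      Tendsto b atTop (𝓝 3) ∧
      Tendsto (fun n : ℕ => 3 * (n : ℝ) * s n) atTop (𝓝 1) := by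
  have key : ∀ n : ℕ, ∃ s a b u : ℝ, 10 ≤ n → 
      (1/(3*(n:ℝ)+2) < s ∧ s < 1/(3*(n:ℝ))) ∧ (1 < a ∧ a < 1+1/(n:ℝ)) ∧
      (3-2/(n:ℝ) < b ∧ b < 3) ∧
      ((n:ℝ) < u ∧ u < (n:ℝ)+1) ∧ (∀ t ∈ ({s, a, b, u} : Set ℝ),
        t ^ 4 - ((n:ℝ) + 4) * t ^ 3 + (4 * (n:ℝ) + 3) * t ^ 2 - (3 * (n:ℝ) + 2) * t + 1 = 0) := by
    intro n
    by_cases h : 10 ≤ n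
    · obtain ⟨s, a, b, u, h'⟩ := pn_roots n (by exact_mod_cast h)
      exact ⟨s, a, b, u, fun _ => h'⟩
    · exact ⟨0, 0, 0, 0, fun h' => absurd h' h⟩
  choose s a b u H using key
  have hinv : Tendsto (fun n : ℕ => 1/(n:ℝ)) atTop (𝓝 0) := tendsto_one_div_atTop_nhds_zero_nat
  have ev : ∀ᶠ n : ℕ in atTop, 10 ≤ n := eventually_ge_atTop 10
  refine ⟨10, s, a, b, u, ?_, ?_, ?_, ?_, ?_⟩
  · intro n hn
    obtain ⟨⟨s1, s2⟩, ⟨a1, a2⟩, ⟨b1, b2⟩, ⟨u1, u2⟩, hr⟩ := H n hn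
    have hn' : (10:ℝ) ≤ n := by exact_mod_cast hn
    have hs0 : 0 < s n := lt_trans (by positivity) s1
    have hi : 1/(n:ℝ) ≤ 1/10 := by gcongr
    have hi2 : 2/(n:ℝ) ≤ 2/10 := by gcongr
    have hi3 : 1/(3*(n:ℝ)) ≤ 1/(3*10) := by gcongr
    have o1 : s n < 1 := by linarith
    have o2 : a n < b n := by linarith
    have o3 : b n < u n := by linarith
    refine ⟨⟨hs0, o1, a1, o2, o3⟩, ?_, hr⟩
    exact pn_vieta _ _ _ _ _ _ _ (o1.trans a1) o2 o3 (hr _ (by simp)) (hr _ (by simp))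
      (hr _ (by simp)) (hr _ (by simp))
  · have h1 : Tendsto (fun n : ℕ => 1 + 1/(n:ℝ)) atTop (𝓝 1) := by
      simpa using hinv.const_add 1
    refine tendsto_of_tendsto_of_tendsto_of_le_of_le' tendsto_const_nhds h1 ?_ ?_
    · filter_upwards [ev] with n hn
      have hn' : (0:ℝ) < n := by exact_mod_cast (by omega : 0 < n)
      rw [le_div_iff₀ hn']
      linarith [(H n hn).2.2.2.1.1]
    · filter_upwards [ev] with n hn
      have hn' : (0:ℝ) < n := by exact_mod_cast (by omega : 0 < n)
      rw [div_le_iff₀ hn', add_mul, one_div_mul_cancel hn'.ne']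
      linarith [(H n hn).2.2.2.1.2]
  · have h1 : Tendsto (fun n : ℕ => 1 + 1/(n:ℝ)) atTop (𝓝 1) := by
      simpa using hinv.const_add 1
    refine tendsto_of_tendsto_of_tendsto_of_le_of_le' tendsto_const_nhds h1 ?_ ?_
    · filter_upwards [ev] with n hn using (H n hn).2.1.1.le
    · filter_upwards [ev] with n hn using (H n hn).2.1.2.le
  · have h1 : Tendsto (fun n : ℕ => 3 - 2/(n:ℝ)) atTop (𝓝 3) := by
      have := (hinv.const_mul 2).const_sub 3
      simpa [div_eq_mul_inv] using this
    refine tendsto_of_tendsto_of_tendsto_of_le_of_le' h1 tendsto_const_nhds ?_ ?_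
    · filter_upwards [ev] with n hn using (H n hn).2.2.1.1.le
    · filter_upwards [ev] with n hn using (H n hn).2.2.1.2.le
  · have h1 : Tendsto (fun n : ℕ => 1 - 1/(n:ℝ)) atTop (𝓝 1) := by
      simpa using hinv.const_sub 1
    refine tendsto_of_tendsto_of_tendsto_of_le_of_le' h1 tendsto_const_nhds ?_ ?_
    · filter_upwards [ev] with n hn
      have hn' : (0:ℝ) < n := by exact_mod_cast (by omega : 0 < n)
      have h2 := (H n hn).1.1
      have h3 : 3*(n:ℝ)*(1/(3*(n:ℝ)+2)) ≤ 3*(n:ℝ)*s n := by gcongr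
      refine le_trans ?_ h3
      rw [mul_one_div, le_div_iff₀ (by positivity)]
      have h4 : (1 - 1/(n:ℝ)) * (3*(n:ℝ)+2) = 3*n - 1 - 2/n := by field_simp; ring
      rw [h4]
      have : 0 < 2/(n:ℝ) := by positivity
      linarith
    · filter_upwards [ev] with n hn
      have hn' : (0:ℝ) < n := by exact_mod_cast (by omega : 0 < n)
      have h2 := (H n hn).1.2
      rw [lt_div_iff₀ (by positivity)] at h2
      linarith
end
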